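/- arXiv:1505.02377 — 4 statements merged into one kernel-verified Lean document; each statement's English description precedes it below -/
import Mathlib

section
/- Let H, Z ∈ ℝ^{d×d} be real symmetric positive semidefinite matrices, let r̄ = min(rank(H), rank(Z)), and let ξ be a random vector in ℝ^d distributed as the multivariate Gaussian N(0, Z) with mean zero and covariance Z. Then for any γ ≥ 1, Prob( ξᵀ H ξ > γ · E[ξᵀ H ξ] ) ≤ r̄ · exp( −(1/2)(γ − √(2γ − 1)) ). -/
open MeasureTheory ProbabilityTheory Matrix

/-- `ξ` is a centered Gaussian random vector with covariance matrix `Z`: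
every linear functional `⟨a, ξ⟩` is distributed as `N(0, aᵀZa)`. -/
def IsCenteredGaussianVector {Ω : Type*} [MeasureSpace Ω] {d : ℕ}
    (ξ : Ω → (Fin d → ℝ)) (Z : Matrix (Fin d) (Fin d) ℝ) : Prop :=
  Measurable ξ ∧ ∀ a : Fin d → ℝ,
    Measure.map (fun ω => a ⬝ᵥ ξ ω) ℙ = gaussianReal 0 (a ⬝ᵥ Z.mulVec a).toNNReal

/-!
Factoring `H = AᴴA` with `rank H` rows writes `ξᵀHξ` as a sum of `rank H` squares of centered real
Gaussians. The sum exceeds `γ` times its mean only if some square exceeds `γ` times its own mean,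
so a union bound reduces the claim to dimension one. There the density of `N(0, v)` is at most
`√γ * exp ((1 - γ) / 2)` times that of `N(0, γv)` on `{x | γv ≤ x²}`, and this constant is a bound
for the tail. Since `1 + x + x² / 2 ≤ eˣ` at `x = √(2γ - 1) - 1` reads `γ ≤ eˣ`, it is at most
`exp (-(γ - √(2γ - 1)) / 2)`.

To bring in the rank of the covariance matrix, let `P` be a projection onto its range: almost surely
`Pξ = ξ`, so `H` may be replaced by `PᴴHP`, whose rank is at most both ranks.
-/

open scoped NNReal

lemma sqrt_mul_exp_le_exp_sub_sqrt {γ : ℝ} (hγ : 1 ≤ γ) :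
    √γ * Real.exp ((1 - γ) / 2) ≤ Real.exp (-(1 / 2) * (γ - √(2 * γ - 1))) := by
  have hs_sq : √(2 * γ - 1) ^ 2 = 2 * γ - 1 := Real.sq_sqrt (by linarith)
  have hs_one : 1 ≤ √(2 * γ - 1) := Real.one_le_sqrt.mpr (by linarith)
  set s := √(2 * γ - 1)
  have hγ_exp : γ ≤ Real.exp (s - 1) := calc
    γ = 1 + (s - 1) + (s - 1) ^ 2 / 2 := by linear_combination -hs_sq / 2
    _ ≤ Real.exp (s - 1) := Real.quadratic_le_exp_of_nonneg (sub_nonneg.mpr hs_one)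
  calc √γ * Real.exp ((1 - γ) / 2)
      ≤ Real.exp ((s - 1) / 2) * Real.exp ((1 - γ) / 2) := by
        gcongr
        rw [Real.exp_half]
        gcongr
    _ = Real.exp (-(1 / 2) * (γ - s)) := by
        rw [← Real.exp_add]
        ring_nf

lemma gaussianPDFReal_le_mul_gaussianPDFReal_mul {γ v : ℝ≥0} {m x : ℝ} (hγ : 1 ≤ γ)
    (hx : γ * v ≤ (x - m) ^ 2) :
    gaussianPDFReal m v x ≤
      √γ * Real.exp ((1 - γ) / 2) * gaussianPDFReal m (γ * v) x := by
  have hγ_pos : (0 : ℝ) < γ := zero_lt_one.trans_le hγ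
  obtain rfl | hv := eq_or_ne v 0
  · simp
  have hγ_one : (1 : ℝ) ≤ γ := hγ
  have hsqrt : √(2 * Real.pi * (γ * v)) = √γ * √(2 * Real.pi * v) := by
    rw [← Real.sqrt_mul hγ_pos.le]
    ring_nf
  have hexponent : -(x - m) ^ 2 / (2 * v) ≤ (1 - γ) / 2 + -(x - m) ^ 2 / (2 * (γ * v)) := by
    have hgap : (1 - γ) / 2 + -(x - m) ^ 2 / (2 * (γ * v)) - -(x - m) ^ 2 / (2 * v) =
        (γ - 1) * ((x - m) ^ 2 - γ * v) / (2 * (γ * v)) := by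
      field_simp
      ring
    rw [← sub_nonneg, hgap]
    exact div_nonneg (mul_nonneg (sub_nonneg.mpr hγ_one) (sub_nonneg.mpr hx)) (by positivity)
  calc gaussianPDFReal m v x
      = (√(2 * Real.pi * v))⁻¹ * Real.exp (-(x - m) ^ 2 / (2 * v)) := rfl
    _ ≤ (√(2 * Real.pi * v))⁻¹ *
          Real.exp ((1 - γ) / 2 + -(x - m) ^ 2 / (2 * (γ * v))) := by gcongr
    _ = √γ * Real.exp ((1 - γ) / 2) * gaussianPDFReal m (γ * v) x := by
        rw [gaussianPDFReal, NNReal.coe_mul, hsqrt, Real.exp_add]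
        field_simp

lemma gaussianReal_mul_lt_sq_sub_le {γ : ℝ} (hγ : 1 ≤ γ) (m : ℝ) (v : ℝ≥0) :
    gaussianReal m v {x | γ * v < (x - m) ^ 2} ≤
      ENNReal.ofReal (√γ * Real.exp ((1 - γ) / 2)) := by
  lift γ to ℝ≥0 using zero_le_one.trans hγ
  obtain rfl | hv := eq_or_ne v 0
  · simp
  have hγv : γ * v ≠ 0 := mul_ne_zero (zero_lt_one.trans_le (α := ℝ≥0) hγ).ne' hv
  set C := √γ * Real.exp ((1 - γ) / 2)
  have hC : 0 ≤ C := by positivity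
  calc gaussianReal m v {x | γ * v < (x - m) ^ 2}
      = ∫⁻ x in {x | γ * v < (x - m) ^ 2}, gaussianPDF m v x := gaussianReal_apply m hv _
    _ ≤ ∫⁻ x in {x | γ * v < (x - m) ^ 2}, ENNReal.ofReal C * gaussianPDF m (γ * v) x := by
        refine setLIntegral_mono' (measurableSet_lt (by fun_prop) (by fun_prop)) fun x hx ↦ ?_
        rw [gaussianPDF, gaussianPDF, ← ENNReal.ofReal_mul hC]
        exact ENNReal.ofReal_le_ofReal (gaussianPDFReal_le_mul_gaussianPDFReal_mul hγ (le_of_lt hx))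
    _ ≤ ∫⁻ x, ENNReal.ofReal C * gaussianPDF m (γ * v) x := setLIntegral_le_lintegral _ _
    _ = ENNReal.ofReal C := by
        rw [lintegral_const_mul _ (measurable_gaussianPDF _ _),
          lintegral_gaussianPDF_eq_one m hγv, mul_one]

section Tail

variable {Ω : Type*} {mΩ : MeasurableSpace Ω} {μ : Measure Ω}

lemma measure_mul_variance_lt_sq_sub_le {X : Ω → ℝ} (hX : HasGaussianLaw X μ) {γ : ℝ}
    (hγ : 1 ≤ γ) :
    μ {ω | γ * Var[X; μ] < (X ω - μ[X]) ^ 2} ≤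
      ENNReal.ofReal (√γ * Real.exp ((1 - γ) / 2)) := by
  have hmeas : MeasurableSet {x | γ * Var[X; μ] < (x - μ[X]) ^ 2} :=
    measurableSet_lt (by fun_prop) (by fun_prop)
  have htail := gaussianReal_mul_lt_sq_sub_le hγ μ[X] Var[X; μ].toNNReal
  rwa [← hX.map_eq_gaussianReal, Real.coe_toNNReal _ (variance_nonneg X μ),
    Measure.map_apply_of_aemeasurable hX.aemeasurable hmeas] at htail

lemma measure_mul_sum_variance_lt_sum_sq_sub_le {ι : Type*} (s : Finset ι) {X : ι → Ω → ℝ}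
    (hX : ∀ i ∈ s, HasGaussianLaw (X i) μ) {γ : ℝ} (hγ : 1 ≤ γ) :
    μ {ω | γ * ∑ i ∈ s, Var[X i; μ] < ∑ i ∈ s, (X i ω - μ[X i]) ^ 2} ≤
      s.card * ENNReal.ofReal (√γ * Real.exp ((1 - γ) / 2)) := by
  calc μ {ω | γ * ∑ i ∈ s, Var[X i; μ] < ∑ i ∈ s, (X i ω - μ[X i]) ^ 2}
      ≤ μ (⋃ i ∈ s, {ω | γ * Var[X i; μ] < (X i ω - μ[X i]) ^ 2}) := by
        refine measure_mono fun ω hω ↦ ?_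
        rw [Set.mem_ofPred_eq, Finset.mul_sum] at hω
        simpa using Finset.exists_lt_of_sum_lt hω
    _ ≤ ∑ i ∈ s, μ {ω | γ * Var[X i; μ] < (X i ω - μ[X i]) ^ 2} :=
        measure_biUnion_finset_le _ _
    _ ≤ s.card * ENNReal.ofReal (√γ * Real.exp ((1 - γ) / 2)) := by
        rw [← nsmul_eq_mul]
        exact Finset.sum_le_card_nsmul _ _ _ fun i hi ↦
          measure_mul_variance_lt_sq_sub_le (hX i hi) hγ

end Tail

section Matrix

open scoped ComplexOrder in
lemma exists_eq_conjTranspose_mul_self_of_posSemidef {𝕜 n : Type*} [RCLike 𝕜] [Fintype n]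
    {H : Matrix n n 𝕜} (hH : H.PosSemidef) :
    ∃ A : Matrix (Fin H.rank) n 𝕜, H = Aᴴ * A := by
  classical
  let U : Matrix n n 𝕜 := hH.isHermitian.eigenvectorUnitary
  let lam := hH.isHermitian.eigenvalues
  have hspec (i j : n) : H i j = ∑ k, U i k * lam k * star (U j k) := by
    conv_lhs => rw [hH.isHermitian.spectral_theorem, Unitary.conjStarAlgAut_apply]
    rw [Matrix.mul_apply]
    simp only [Matrix.mul_diagonal, Matrix.star_apply, Function.comp_apply, U, lam]
  obtain ⟨e⟩ : Nonempty (Fin H.rank ≃ {k // lam k ≠ 0}) :=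
    ⟨Fintype.equivOfCardEq ((Fintype.card_fin _).trans hH.isHermitian.rank_eq_card_non_zero_eigs)⟩
  have hsupport {k : n} (hk : k ∉ Set.range fun l ↦ (e l : n)) : lam k = 0 := by
    by_contra hne
    exact hk ⟨e.symm ⟨k, hne⟩, by simp⟩
  refine ⟨.of fun l j ↦ (√(lam (e l)) : 𝕜) * star (U j (e l)), ?_⟩
  ext i j
  calc H i j = ∑ k, U i k * lam k * star (U j k) := hspec i j
    _ = ∑ l, U i (e l) * lam (e l) * star (U j (e l)) := by
        refine (Fintype.sum_of_injective _ (Subtype.val_injective.comp e.injective) _ _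
          (fun k hk ↦ ?_) fun l ↦ rfl).symm
        rw [hsupport hk, RCLike.ofReal_zero, mul_zero, zero_mul]
    _ = _ := Finset.sum_congr rfl fun l _ ↦ by
        have hsqrt : (√(lam (e l)) : 𝕜) * √(lam (e l)) = lam (e l) := by
          rw [← RCLike.ofReal_mul, Real.mul_self_sqrt (hH.eigenvalues_nonneg _)]
        simp only [conjTranspose_apply, Matrix.of_apply, star_mul', RCLike.star_def,
          RCLike.conj_ofReal, RCLike.conj_conj, ← hsqrt]
        ring

lemma exists_rank_le_mul_eq_self {K m n : Type*} [Field K] [Fintype m] [Fintype n]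
    (Z : Matrix m n K) : ∃ P : Matrix m m K, P.rank ≤ Z.rank ∧ P * Z = Z := by
  classical
  set range := LinearMap.range Z.mulVecLin
  obtain ⟨proj, hproj⟩ := range.subtype.exists_leftInverse_of_injective range.ker_subtype
  refine ⟨LinearMap.toMatrix' (range.subtype ∘ₗ proj), ?_, ?_⟩
  · rw [Matrix.rank, ← Matrix.toLin'_apply', Matrix.toLin'_toMatrix']
    exact Submodule.finrank_mono (by rintro _ ⟨x, rfl⟩; simp)
  · refine Matrix.ext_of_mulVec_single fun j ↦ ?_
    have h := LinearMap.congr_fun hproj ⟨Z *ᵥ Pi.single j 1, LinearMap.mem_range_self _ _⟩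
    rw [← Matrix.mulVec_mulVec, ← Matrix.toLin'_apply, Matrix.toLin'_toMatrix']
    exact congrArg Subtype.val h

lemma eq_of_dotProduct_mulVec_self {K n : Type*} [Field K] [NeZero (2 : K)] [Fintype n]
    {A B : Matrix n n K} (hA : A.IsSymm) (hB : B.IsSymm)
    (h : ∀ x, x ⬝ᵥ A *ᵥ x = x ⬝ᵥ B *ᵥ x) : A = B := by
  classical
  refine Matrix.toBilin'.injective (LinearMap.BilinForm.ext_of_isSymm
    (isSymm_toBilin'_iff_isSymm.mpr hA) (isSymm_toBilin'_iff_isSymm.mpr hB) fun x ↦ ?_)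
  rw [toBilin'_apply', toBilin'_apply', h x]

end Matrix

section Vector

variable {Ω n : Type*} {mΩ : MeasurableSpace Ω} {μ : Measure Ω} {ξ : Ω → n → ℝ}

/-- The covariance matrix of a random vector `ξ` under `μ`. -/
noncomputable def covarianceMatrix (ξ : Ω → n → ℝ) (μ : Measure Ω) : Matrix n n ℝ :=
  .of fun i j ↦ cov[fun ω ↦ ξ ω i, fun ω ↦ ξ ω j; μ]

lemma covarianceMatrix_isSymm : (covarianceMatrix ξ μ).IsSymm :=
  .ext fun _ _ ↦ covariance_comm _ _

variable [Fintype n]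

lemma hasGaussianLaw_dotProduct (hξ : HasGaussianLaw ξ μ) (a : n → ℝ) :
    HasGaussianLaw (fun ω ↦ a ⬝ᵥ ξ ω) μ := by
  classical
  exact hξ.map_fun (dotProductEquiv ℝ n a).toContinuousLinearMap

lemma hasGaussianLaw_of_forall_dotProduct (hξ : AEMeasurable ξ μ)
    (h : ∀ a, HasGaussianLaw (fun ω ↦ a ⬝ᵥ ξ ω) μ) : HasGaussianLaw ξ μ where
  isGaussian_map := by
    classical
    refine isGaussian_of_isGaussian_map fun L ↦ ?_
    obtain ⟨a, ha⟩ := (dotProductEquiv ℝ n).surjective L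
    have hL : L ∘ ξ = fun ω ↦ a ⬝ᵥ ξ ω := funext fun ω ↦ (LinearMap.congr_fun ha (ξ ω)).symm
    rw [AEMeasurable.map_map_of_aemeasurable (by fun_prop) hξ, hL]
    exact (h a).isGaussian_map

lemma integral_dotProduct (hξ : Integrable ξ μ) (a : n → ℝ) :
    ∫ ω, a ⬝ᵥ ξ ω ∂μ = a ⬝ᵥ μ[ξ] := by
  classical
  exact (dotProductEquiv ℝ n a).toContinuousLinearMap.integral_comp_comm hξ

lemma memLp_dotProduct {p : ENNReal} (hξ : MemLp ξ p μ) (a : n → ℝ) :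
    MemLp (fun ω ↦ a ⬝ᵥ ξ ω) p μ := by
  classical
  exact (dotProductEquiv ℝ n a).toContinuousLinearMap.comp_memLp' hξ

lemma variance_dotProduct [IsFiniteMeasure μ] (hξ : MemLp ξ 2 μ) (a : n → ℝ) :
    Var[fun ω ↦ a ⬝ᵥ ξ ω; μ] = a ⬝ᵥ covarianceMatrix ξ μ *ᵥ a := by
  have hcoord (i : n) : MemLp (fun ω ↦ a i * ξ ω i) 2 μ := (hξ.eval i).const_mul (a i)
  simp only [dotProduct, variance_fun_sum hcoord, covariance_const_mul_left,
    covariance_const_mul_right, covarianceMatrix, mulVec, Matrix.of_apply, Finset.mul_sum]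
  exact Finset.sum_congr rfl fun i _ ↦ Finset.sum_congr rfl fun j _ ↦ by ring

lemma ae_dotProduct_eq_of_vecMul_covarianceMatrix_eq_zero [IsFiniteMeasure μ]
    (hξ : MemLp ξ 2 μ) {a : n → ℝ} (ha : a ᵥ* covarianceMatrix ξ μ = 0) :
    ∀ᵐ ω ∂μ, a ⬝ᵥ ξ ω = a ⬝ᵥ μ[ξ] := by
  rw [← integral_dotProduct (hξ.integrable one_le_two)]
  refine ae_eq_integral_of_variance_eq_zero (memLp_dotProduct hξ a) ?_
  rw [variance_dotProduct hξ, dotProduct_mulVec, ha, zero_dotProduct]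

lemma ae_mulVec_sub_integral_eq_self [IsFiniteMeasure μ] (hξ : MemLp ξ 2 μ) {P : Matrix n n ℝ}
    (hP : P * covarianceMatrix ξ μ = covarianceMatrix ξ μ) :
    ∀ᵐ ω ∂μ, P *ᵥ (ξ ω - μ[ξ]) = ξ ω - μ[ξ] := by
  classical
  have hker : (P - 1) * covarianceMatrix ξ μ = 0 := by rw [sub_mul, hP, one_mul, sub_self]
  have hrow (i : n) : ∀ᵐ ω ∂μ, (P - 1) i ⬝ᵥ ξ ω = (P - 1) i ⬝ᵥ μ[ξ] :=
    ae_dotProduct_eq_of_vecMul_covarianceMatrix_eq_zero hξ (congrFun hker i)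
  filter_upwards [ae_all_iff.mpr hrow] with ω hω
  have hsub : (P - 1) *ᵥ (ξ ω - μ[ξ]) = 0 := by
    rw [mulVec_sub, sub_eq_zero]
    exact funext hω
  rwa [sub_mulVec, one_mulVec, sub_eq_zero] at hsub

lemma measure_mul_integral_quadForm_lt_le_rank (hξ : HasGaussianLaw ξ μ) {H : Matrix n n ℝ}
    (hH : H.PosSemidef) {γ : ℝ} (hγ : 1 ≤ γ) :
    μ {ω | γ * ∫ ω, (ξ ω - μ[ξ]) ⬝ᵥ H *ᵥ (ξ ω - μ[ξ]) ∂μ <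
        (ξ ω - μ[ξ]) ⬝ᵥ H *ᵥ (ξ ω - μ[ξ])} ≤
      H.rank * ENNReal.ofReal (√γ * Real.exp ((1 - γ) / 2)) := by
  have := hξ.isProbabilityMeasure
  obtain ⟨A, hA⟩ := exists_eq_conjTranspose_mul_self_of_posSemidef hH
  let X (i : Fin H.rank) (ω : Ω) : ℝ := A i ⬝ᵥ ξ ω
  have hX (i : Fin H.rank) : HasGaussianLaw (X i) μ := hasGaussianLaw_dotProduct hξ (A i)
  have hquad (ω : Ω) : (ξ ω - μ[ξ]) ⬝ᵥ H *ᵥ (ξ ω - μ[ξ]) = ∑ i, (X i ω - μ[X i]) ^ 2 := by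
    have hcoord (i : Fin H.rank) : (A *ᵥ (ξ ω - μ[ξ])) i = X i ω - μ[X i] := by
      rw [integral_dotProduct hξ.integrable, ← dotProduct_sub]
      rfl
    conv_lhs => rw [hA]
    rw [conjTranspose_eq_transpose_of_trivial, ← mulVec_mulVec, dotProduct_mulVec, vecMul_transpose,
      dotProduct]
    simp only [hcoord, sq]
  have hmean : ∫ ω, ∑ i, (X i ω - μ[X i]) ^ 2 ∂μ = ∑ i, Var[X i; μ] := by
    have hint (i : Fin H.rank) : Integrable (fun ω ↦ (X i ω - μ[X i]) ^ 2) μ :=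
      ((hX i).memLp_two.sub (memLp_const _)).integrable_sq
    rw [integral_finsetSum _ fun i _ ↦ hint i]
    exact Finset.sum_congr rfl fun i _ ↦ (variance_eq_integral (hX i).aemeasurable).symm
  simp only [hquad, hmean]
  simpa using measure_mul_sum_variance_lt_sum_sq_sub_le Finset.univ (fun i _ ↦ hX i) hγ

theorem gaussian_quadForm_upper_tail_general (hξ : HasGaussianLaw ξ μ) {H : Matrix n n ℝ}
    (hH : H.PosSemidef) {γ : ℝ} (hγ : 1 ≤ γ) :
    μ {ω | (ξ ω - μ[ξ]) ⬝ᵥ H *ᵥ (ξ ω - μ[ξ]) >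
        γ * ∫ ω, (ξ ω - μ[ξ]) ⬝ᵥ H *ᵥ (ξ ω - μ[ξ]) ∂μ} ≤
      ENNReal.ofReal ((min H.rank (covarianceMatrix ξ μ).rank : ℝ) *
        (√γ * Real.exp ((1 - γ) / 2))) := by
  have := hξ.isProbabilityMeasure
  obtain ⟨P, hP_rank, hP_cov⟩ := exists_rank_le_mul_eq_self (covarianceMatrix ξ μ)
  have hrank : (Pᴴ * H * P).rank ≤ min H.rank (covarianceMatrix ξ μ).rank :=
    le_min ((rank_mul_le_left _ _).trans (rank_mul_le_right _ _))
      ((rank_mul_le_right _ _).trans hP_rank)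
  have hquad : (fun ω ↦ (ξ ω - μ[ξ]) ⬝ᵥ H *ᵥ (ξ ω - μ[ξ])) =ᵐ[μ]
      fun ω ↦ (ξ ω - μ[ξ]) ⬝ᵥ (Pᴴ * H * P) *ᵥ (ξ ω - μ[ξ]) := by
    filter_upwards [ae_mulVec_sub_integral_eq_self hξ.memLp_two hP_cov] with ω hω
    rw [conjTranspose_eq_transpose_of_trivial, ← mulVec_mulVec, ← mulVec_mulVec, hω,
      dotProduct_mulVec _ Pᵀ, vecMul_transpose, hω]
  rw [integral_congr_ae hquad]
  calc _ ≤ _ := measure_mono_ae (hquad.mono fun ω hω (h : _ < _) ↦ h.trans_eq hω)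
    _ ≤ _ := measure_mul_integral_quadForm_lt_le_rank hξ (hH.conjTranspose_mul_mul_same P) hγ
    _ ≤ ENNReal.ofReal ((min H.rank (covarianceMatrix ξ μ).rank : ℝ) *
        (√γ * Real.exp ((1 - γ) / 2))) := by
        rw [← Nat.cast_min, ENNReal.ofReal_mul (Nat.cast_nonneg _), ENNReal.ofReal_natCast]
        gcongr

end Vector

namespace IsCenteredGaussianVector

variable {Ω : Type*} [MeasureSpace Ω] {d : ℕ} {ξ : Ω → Fin d → ℝ} {Z : Matrix (Fin d) (Fin d) ℝ}

lemma hasGaussianLaw (hξ : IsCenteredGaussianVector ξ Z) : HasGaussianLaw ξ ℙ :=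
  hasGaussianLaw_of_forall_dotProduct hξ.1.aemeasurable fun a ↦
    ⟨hξ.2 a ▸ isGaussian_gaussianReal _ _⟩

lemma hasLaw_dotProduct (hξ : IsCenteredGaussianVector ξ Z) (a : Fin d → ℝ) :
    HasLaw (fun ω ↦ a ⬝ᵥ ξ ω) (gaussianReal 0 (a ⬝ᵥ Z *ᵥ a).toNNReal) where
  aemeasurable := by have := hξ.1; fun_prop
  map_eq := hξ.2 a

lemma integral_eq_zero (hξ : IsCenteredGaussianVector ξ Z) : 𝔼[ξ] = 0 := by
  refine dotProduct_eq_zero _ fun a ↦ ?_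
  rw [dotProduct_comm, ← integral_dotProduct hξ.hasGaussianLaw.integrable,
    (hξ.hasLaw_dotProduct a).integral_eq, integral_id_gaussianReal]

lemma covarianceMatrix_eq (hξ : IsCenteredGaussianVector ξ Z) (hZ : Z.PosSemidef) :
    covarianceMatrix ξ ℙ = Z := by
  have := hξ.hasGaussianLaw.isProbabilityMeasure
  refine eq_of_dotProduct_mulVec_self covarianceMatrix_isSymm hZ.isHermitian fun a ↦ ?_
  rw [← variance_dotProduct hξ.hasGaussianLaw.memLp_two, (hξ.hasLaw_dotProduct a).variance_eq,
    variance_id_gaussianReal, Real.coe_toNNReal _ (by simpa using hZ.dotProduct_mulVec_nonneg a)]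

end IsCenteredGaussianVector

/-- Right-side exponential tail bound for Gaussian quadratic forms: for PSD
`H, Z`, `ξ ~ N(0, Z)`, `r̄ = min(rank H, rank Z)` and `γ ≥ 1`,
`P(ξᵀHξ > γ·E[ξᵀHξ]) ≤ r̄ · exp(−(γ − √(2γ − 1))/2)`. -/
theorem gaussian_quadForm_upper_tail {Ω : Type*} [MeasureSpace Ω]
    [IsProbabilityMeasure (ℙ : Measure Ω)] {d : ℕ}
    (H Z : Matrix (Fin d) (Fin d) ℝ) (hH : H.PosSemidef) (hZ : Z.PosSemidef)
    (ξ : Ω → (Fin d → ℝ)) (hξ : IsCenteredGaussianVector ξ Z)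
    (γ : ℝ) (hγ : 1 ≤ γ) :
    ℙ {ω | ξ ω ⬝ᵥ H.mulVec (ξ ω) > γ * ∫ ω, ξ ω ⬝ᵥ H.mulVec (ξ ω) ∂ℙ} ≤
      ENNReal.ofReal ((min H.rank Z.rank : ℝ) *
        Real.exp (-(1 / 2) * (γ - Real.sqrt (2 * γ - 1)))) := by
  have htail := gaussian_quadForm_upper_tail_general hξ.hasGaussianLaw hH hγ
  simp only [hξ.integral_eq_zero, sub_zero, hξ.covarianceMatrix_eq hZ] at htail
  refine htail.trans (ENNReal.ofReal_le_ofReal ?_)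
  gcongr
  exact sqrt_mul_exp_le_exp_sub_sqrt hγ
end

section
/- Let u be a standard normal random variable (mean 0, variance 1). Then for any γ ≥ 1, Prob( u² ≥ γ ) ≤ exp( −(1/2)(γ − √(2γ − 1)) ). -/
open MeasureTheory ProbabilityTheory

/-!
If `x` lies on the same side of `μ` as `μ + t`, then `(x - (μ - t))² ≥ (x - μ)² + t²`, so moving the
mean from `μ` to `μ - t` multiplies the Gaussian density at `x` by at most `exp (-t² / (2v))`.
Each tail beyond `μ ± t` is a translate of the corresponding half-line ending at `μ`, and the two
half-lines together have mass one. Hence `P(|X - μ| ≥ t) ≤ exp (-t² / (2v))`, without the factor `2`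
that a union bound of one-sided Chernoff bounds would give. For `μ = 0`, `v = 1` and `t = √γ` the
right-hand side is `exp (-γ / 2) ≤ exp (-(γ - √(2γ - 1)) / 2)`.
-/

open scoped NNReal

section GaussianTail

variable {μ t : ℝ} {v : ℝ≥0}

lemma gaussianPDFReal_sub_mean_le {x : ℝ} (hx : 0 ≤ t * (x - μ)) :
    gaussianPDFReal (μ - t) v x ≤ Real.exp (-t ^ 2 / (2 * v)) * gaussianPDFReal μ v x := by
  have sq_add_sq_le : (x - μ) ^ 2 + t ^ 2 ≤ (x - (μ - t)) ^ 2 := by linear_combination 2 * hx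
  calc gaussianPDFReal (μ - t) v x
      ≤ (√(2 * Real.pi * v))⁻¹ * Real.exp (-((x - μ) ^ 2 + t ^ 2) / (2 * v)) := by
        rw [gaussianPDFReal]
        gcongr
    _ = Real.exp (-t ^ 2 / (2 * v)) * gaussianPDFReal μ v x := by
        rw [gaussianPDFReal, neg_add, add_div, Real.exp_add]
        ring

lemma gaussianReal_sub_mean_le (hv : v ≠ 0) {s : Set ℝ} (hs : MeasurableSet s)
    (hst : ∀ x ∈ s, 0 ≤ t * (x - μ)) :
    gaussianReal (μ - t) v s ≤
      ENNReal.ofReal (Real.exp (-t ^ 2 / (2 * v))) * gaussianReal μ v s := by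
  rw [gaussianReal_apply _ hv, gaussianReal_apply _ hv,
    ← lintegral_const_mul _ (measurable_gaussianPDF μ v)]
  refine setLIntegral_mono' hs fun x hx ↦ ?_
  rw [gaussianPDF, gaussianPDF, ← ENNReal.ofReal_mul (Real.exp_nonneg _)]
  exact ENNReal.ofReal_le_ofReal (gaussianPDFReal_sub_mean_le (hst x hx))

lemma gaussianReal_Ici_mean_add_le (hv : v ≠ 0) (ht : 0 ≤ t) :
    gaussianReal μ v (Set.Ici (μ + t)) ≤
      ENNReal.ofReal (Real.exp (-t ^ 2 / (2 * v))) * gaussianReal μ v (Set.Ici μ) := by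
  have translate : gaussianReal μ v (Set.Ici (μ + t)) = gaussianReal (μ - t) v (Set.Ici μ) := by
    rw [← gaussianReal_map_sub_const, Measure.map_apply (by fun_prop) measurableSet_Ici,
      Set.preimage_sub_const_Ici]
  rw [translate]
  exact gaussianReal_sub_mean_le hv measurableSet_Ici fun x hx ↦ mul_nonneg ht (sub_nonneg.2 hx)

lemma gaussianReal_Iic_mean_sub_le (hv : v ≠ 0) (ht : 0 ≤ t) :
    gaussianReal μ v (Set.Iic (μ - t)) ≤
      ENNReal.ofReal (Real.exp (-t ^ 2 / (2 * v))) * gaussianReal μ v (Set.Iic μ) := by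
  have translate : gaussianReal μ v (Set.Iic (μ - t)) = gaussianReal (μ - -t) v (Set.Iic μ) := by
    rw [sub_neg_eq_add, ← gaussianReal_map_add_const, Measure.map_apply (by fun_prop)
      measurableSet_Iic, Set.preimage_add_const_Iic]
  rw [translate, ← neg_sq t]
  exact gaussianReal_sub_mean_le hv measurableSet_Iic fun x hx ↦
    mul_nonneg_of_nonpos_of_nonpos (neg_nonpos.2 ht) (sub_nonpos.2 hx)

lemma measure_Ici_add_measure_Iic {α : Type*} [LinearOrder α] [TopologicalSpace α]
    [ClosedIciTopology α] [MeasurableSpace α] [OpensMeasurableSpace α]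
    (ν : Measure α) [NullSingletonClass ν] (a : α) :
    ν (Set.Ici a) + ν (Set.Iic a) = ν Set.univ := by
  rw [← measure_congr Iio_ae_eq_Iic, ← Set.compl_Ici, measure_add_measure_compl measurableSet_Ici]

lemma gaussianReal_le_abs_sub_mean_le (hv : v ≠ 0) (ht : 0 ≤ t) :
    gaussianReal μ v {x | t ≤ |x - μ|} ≤ ENNReal.ofReal (Real.exp (-t ^ 2 / (2 * v))) := by
  have : NullSingletonClass (gaussianReal μ v) := nullSingletonClass_gaussianReal hv
  have tails : {x | t ≤ |x - μ|} = Set.Ici (μ + t) ∪ Set.Iic (μ - t) := by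
    ext x
    simp only [Set.mem_ofPred_eq, Set.mem_union, Set.mem_Ici, Set.mem_Iic, le_abs]
    grind
  calc gaussianReal μ v {x | t ≤ |x - μ|}
      ≤ gaussianReal μ v (Set.Ici (μ + t)) + gaussianReal μ v (Set.Iic (μ - t)) :=
        tails ▸ measure_union_le _ _
    _ ≤ ENNReal.ofReal (Real.exp (-t ^ 2 / (2 * v))) *
          (gaussianReal μ v (Set.Ici μ) + gaussianReal μ v (Set.Iic μ)) := by
        rw [mul_add]
        exact add_le_add (gaussianReal_Ici_mean_add_le hv ht) (gaussianReal_Iic_mean_sub_le hv ht)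
    _ = ENNReal.ofReal (Real.exp (-t ^ 2 / (2 * v))) := by
        rw [measure_Ici_add_measure_Iic, measure_univ, mul_one]

end GaussianTail

theorem sq_gaussian_tail_bound_general {Ω : Type*} {mΩ : MeasurableSpace Ω} {P : Measure Ω}
    {X : Ω → ℝ} {μ : ℝ} {v : ℝ≥0} (hX : HasLaw X (gaussianReal μ v) P) (hv : v ≠ 0) (γ : ℝ) :
    P {ω | γ ≤ (X ω - μ) ^ 2} ≤ ENNReal.ofReal (Real.exp (-γ / (2 * v))) := by
  have le_sqrt_sq : γ ≤ √γ ^ 2 := (Real.sqrt_le_left (Real.sqrt_nonneg γ)).1 le_rfl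
  have measurableSet_tails : MeasurableSet {x : ℝ | √γ ≤ |x - μ|} :=
    measurableSet_le (by fun_prop) (by fun_prop)
  calc P {ω | γ ≤ (X ω - μ) ^ 2}
      ≤ P {ω | √γ ≤ |X ω - μ|} := measure_mono fun ω hω ↦
        (Real.sqrt_le_sqrt hω).trans_eq (Real.sqrt_sq_eq_abs _)
    _ = gaussianReal μ v {x | √γ ≤ |x - μ|} := hX.measure_eq measurableSet_tails
    _ ≤ ENNReal.ofReal (Real.exp (-√γ ^ 2 / (2 * v))) :=
        gaussianReal_le_abs_sub_mean_le hv (Real.sqrt_nonneg γ)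
    _ ≤ ENNReal.ofReal (Real.exp (-γ / (2 * v))) := by gcongr

/-- Tail bound for the square of a standard normal random variable:
for `γ ≥ 1`, `P(u² ≥ γ) ≤ exp(−(γ − √(2γ − 1))/2)`. -/
theorem sq_gaussian_tail_bound {Ω : Type*} [MeasureSpace Ω]
    [IsProbabilityMeasure (ℙ : Measure Ω)] (u : Ω → ℝ) (hu : Measurable u)
    (hgauss : Measure.map u ℙ = gaussianReal 0 1)
    (γ : ℝ) (hγ : 1 ≤ γ) :
    ℙ {ω | u ω ^ 2 ≥ γ} ≤
      ENNReal.ofReal (Real.exp (-(1 / 2) * (γ - Real.sqrt (2 * γ - 1)))) := by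
  have tail := sq_gaussian_tail_bound_general ⟨hu.aemeasurable, hgauss⟩ one_ne_zero γ
  simp only [sub_zero, NNReal.coe_one] at tail
  exact tail.trans <| by gcongr; linarith [Real.sqrt_nonneg (2 * γ - 1)]
end

section
/- Let u_1, …, u_r be independent standard normal random variables and let λ̄_1, …, λ̄_r be nonnegative reals with Σ_{i=1}^r λ̄_i = 1. Then for any γ ≥ 1, Prob( Σ_{i=1}^r λ̄_i u_i² > γ ) ≤ r · exp( −(1/2)(γ − √(2γ − 1)) ). -/
open MeasureTheory ProbabilityTheory

/-!
Apply Chernoff's bound to `S = ∑ λᵢ uᵢ²`. By Jensen's inequality for `exp`,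
`E exp (t S) ≤ ∑ λᵢ E exp (t uᵢ²) = (1 - 2 t)^(-1/2)` for `t < 1 / 2`. The minimizer
`t = (1 - γ⁻¹) / 2` of `exp (-t γ) (1 - 2 t)^(-1/2)` yields the bound `√γ exp (-(γ - 1) / 2)`.
Finally, with `s = √(2 γ - 1) - 1 ≥ 0` one has `γ = 1 + s + s ^ 2 / 2 ≤ exp s`.
-/

section GaussianSquare

open scoped NNReal

variable {v : ℝ≥0} {t : ℝ}

lemma gaussianPDFReal_zero_mul_exp_mul_sq (hv : v ≠ 0) (t x : ℝ) :
    gaussianPDFReal 0 v x * Real.exp (t * x ^ 2) =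
      (√(2 * Real.pi * v))⁻¹ * Real.exp (-((1 - 2 * v * t) / (2 * v)) * x ^ 2) := by
  have hv' : (v : ℝ) ≠ 0 := NNReal.coe_ne_zero.mpr hv
  rw [gaussianPDFReal, mul_assoc, ← Real.exp_add]
  congr 2
  field_simp
  ring

lemma integrable_exp_mul_sq_gaussianReal (ht : 2 * v * t < 1) :
    Integrable (fun x ↦ Real.exp (t * x ^ 2)) (gaussianReal 0 v) := by
  rcases eq_or_ne v 0 with rfl | hv
  · rw [gaussianReal_zero_var]
    exact integrable_dirac (by simp)
  have hrate : 0 < (1 - 2 * v * t) / (2 * v) := div_pos (sub_pos.mpr ht) (by positivity)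
  rw [gaussianReal_of_var_ne_zero 0 hv,
    integrable_withDensity_iff_integrable_smul' (measurable_gaussianPDF 0 v)
      (.of_forall fun _ ↦ ENNReal.ofReal_lt_top)]
  simp only [toReal_gaussianPDF, smul_eq_mul, gaussianPDFReal_zero_mul_exp_mul_sq hv]
  exact (integrable_exp_neg_mul_sq hrate).const_mul _

lemma mgf_sq_gaussianReal (ht : 2 * v * t < 1) :
    mgf (fun x ↦ x ^ 2) (gaussianReal 0 v) t = (√(1 - 2 * v * t))⁻¹ := by
  rcases eq_or_ne v 0 with rfl | hv
  · simp [mgf]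
  have hgap : 0 < 1 - 2 * v * t := sub_pos.mpr ht
  calc mgf (fun x ↦ x ^ 2) (gaussianReal 0 v) t
      = (√(2 * Real.pi * v))⁻¹ * √(Real.pi / ((1 - 2 * v * t) / (2 * v))) := by
        simp only [mgf, integral_gaussianReal_eq_integral_smul hv, smul_eq_mul,
          gaussianPDFReal_zero_mul_exp_mul_sq hv, integral_const_mul, integral_gaussian]
    _ = (√(1 - 2 * v * t))⁻¹ := by
        rw [← Real.sqrt_inv, ← Real.sqrt_inv, ← Real.sqrt_mul (by positivity)]
        congr 1
        field_simp

variable {Ω : Type*} {mΩ : MeasurableSpace Ω} {μ : Measure Ω} {X : Ω → ℝ}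

lemma integrable_exp_mul_sq_of_hasLaw_gaussianReal (hX : HasLaw X (gaussianReal 0 v) μ)
    (ht : 2 * v * t < 1) : Integrable (fun ω ↦ Real.exp (t * X ω ^ 2)) μ :=
  (hX.map_eq ▸ integrable_exp_mul_sq_gaussianReal ht).comp_aemeasurable hX.aemeasurable

lemma mgf_sq_of_hasLaw_gaussianReal (hX : HasLaw X (gaussianReal 0 v) μ) (ht : 2 * v * t < 1) :
    mgf (fun ω ↦ X ω ^ 2) μ t = (√(1 - 2 * v * t))⁻¹ := by
  rw [← mgf_sq_gaussianReal ht, ← hX.map_eq, mgf_map hX.aemeasurable (by fun_prop)]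
  rfl

end GaussianSquare

section ConvexCombination

variable {ι : Type*} {s : Finset ι} {w : ι → ℝ}

lemma exp_mul_sum_le_sum_mul_exp (hw : ∀ i ∈ s, 0 ≤ w i) (hw_sum : ∑ i ∈ s, w i = 1)
    (t : ℝ) (x : ι → ℝ) :
    Real.exp (t * ∑ i ∈ s, w i * x i) ≤ ∑ i ∈ s, w i * Real.exp (t * x i) := by
  have jensen := convexOn_exp.map_sum_le hw hw_sum (p := fun i ↦ t * x i) fun _ _ ↦ Set.mem_univ _
  simpa only [smul_eq_mul, Finset.mul_sum, mul_left_comm t] using jensen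

variable {Ω : Type*} {mΩ : MeasurableSpace Ω} {μ : Measure Ω} {X : ι → Ω → ℝ} {t : ℝ}

lemma integrable_exp_mul_convexCombination (hw : ∀ i ∈ s, 0 ≤ w i) (hw_sum : ∑ i ∈ s, w i = 1)
    (hX : ∀ i ∈ s, Integrable (fun ω ↦ Real.exp (t * X i ω)) μ) :
    Integrable (fun ω ↦ Real.exp (t * ∑ i ∈ s, w i * X i ω)) μ := by
  have hmeas : AEMeasurable (fun ω ↦ t * ∑ i ∈ s, w i * X i ω) μ := by
    simp only [Finset.mul_sum, mul_left_comm t]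
    exact Finset.aemeasurable_fun_sum s fun i hi ↦
      (Real.aemeasurable_of_aemeasurable_exp (hX i hi).aemeasurable).const_mul (w i)
  refine (integrable_finsetSum s fun i hi ↦ (hX i hi).const_mul (w i)).mono'
    hmeas.exp.aestronglyMeasurable (.of_forall fun ω ↦ ?_)
  rw [Real.norm_of_nonneg (Real.exp_nonneg _)]
  exact exp_mul_sum_le_sum_mul_exp hw hw_sum t fun i ↦ X i ω

lemma mgf_convexCombination_le (hw : ∀ i ∈ s, 0 ≤ w i) (hw_sum : ∑ i ∈ s, w i = 1)
    (hX : ∀ i ∈ s, Integrable (fun ω ↦ Real.exp (t * X i ω)) μ) :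
    mgf (fun ω ↦ ∑ i ∈ s, w i * X i ω) μ t ≤ ∑ i ∈ s, w i * mgf (X i) μ t := by
  have hX_smul : ∀ i ∈ s, Integrable (fun ω ↦ w i * Real.exp (t * X i ω)) μ :=
    fun i hi ↦ (hX i hi).const_mul (w i)
  calc mgf (fun ω ↦ ∑ i ∈ s, w i * X i ω) μ t
      ≤ ∫ ω, ∑ i ∈ s, w i * Real.exp (t * X i ω) ∂μ :=
        integral_mono (integrable_exp_mul_convexCombination hw hw_sum hX)
          (integrable_finsetSum s hX_smul)
          fun ω ↦ exp_mul_sum_le_sum_mul_exp hw hw_sum t fun i ↦ X i ω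
    _ = ∑ i ∈ s, w i * mgf (X i) μ t := by
        simp only [integral_finsetSum s hX_smul, integral_const_mul, mgf]

lemma measureReal_convexCombination_ge_le_exp_mul_sum_mgf [IsFiniteMeasure μ]
    (hw : ∀ i ∈ s, 0 ≤ w i) (hw_sum : ∑ i ∈ s, w i = 1) (ht : 0 ≤ t)
    (hX : ∀ i ∈ s, Integrable (fun ω ↦ Real.exp (t * X i ω)) μ) (γ : ℝ) :
    μ.real {ω | γ ≤ ∑ i ∈ s, w i * X i ω} ≤
      Real.exp (-t * γ) * ∑ i ∈ s, w i * mgf (X i) μ t :=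
  (measure_ge_le_exp_mul_mgf γ ht (integrable_exp_mul_convexCombination hw hw_sum hX)).trans <|
    mul_le_mul_of_nonneg_left (mgf_convexCombination_le hw hw_sum hX) (Real.exp_nonneg _)

lemma measure_convexCombination_sq_gaussian_ge_le (hw : ∀ i ∈ s, 0 ≤ w i)
    (hw_sum : ∑ i ∈ s, w i = 1) (hX : ∀ i ∈ s, HasLaw (X i) (gaussianReal 0 1) μ)
    {γ : ℝ} (hγ : 1 ≤ γ) :
    μ {ω | γ ≤ ∑ i ∈ s, w i * X i ω ^ 2} ≤
      ENNReal.ofReal (Real.exp (-((γ - 1) / 2)) * √γ) := by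
  obtain ⟨j, hj⟩ : s.Nonempty := Finset.nonempty_of_sum_ne_zero (hw_sum ▸ one_ne_zero)
  have : IsFiniteMeasure μ := (hX j hj).isFiniteMeasure
  have hγ_pos : 0 < γ := one_pos.trans_le hγ
  let t : ℝ := (1 - γ⁻¹) / 2
  have ht_nonneg : 0 ≤ t := div_nonneg (sub_nonneg.mpr (inv_le_one_of_one_le₀ hγ)) two_pos.le
  have hgap : 1 - 2 * ((1 : NNReal) : ℝ) * t = γ⁻¹ := by simp only [t, NNReal.coe_one]; ring
  have ht_lt : 2 * ((1 : NNReal) : ℝ) * t < 1 := sub_pos.mp (hgap ▸ inv_pos.mpr hγ_pos)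
  have hmgf : ∀ i ∈ s, mgf (fun ω ↦ X i ω ^ 2) μ t = √γ := fun i hi ↦ by
    rw [mgf_sq_of_hasLaw_gaussianReal (hX i hi) ht_lt, hgap, Real.sqrt_inv, inv_inv]
  rw [ENNReal.le_ofReal_iff_toReal_le (measure_ne_top _ _) (by positivity)]
  calc μ.real {ω | γ ≤ ∑ i ∈ s, w i * X i ω ^ 2}
      ≤ Real.exp (-t * γ) * ∑ i ∈ s, w i * mgf (fun ω ↦ X i ω ^ 2) μ t :=
        measureReal_convexCombination_ge_le_exp_mul_sum_mgf hw hw_sum ht_nonneg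
          (fun i hi ↦ integrable_exp_mul_sq_of_hasLaw_gaussianReal (hX i hi) ht_lt) γ
    _ = Real.exp (-t * γ) * √γ := by
        rw [Finset.sum_congr rfl fun i hi ↦ by rw [hmgf i hi], ← Finset.sum_mul, hw_sum, one_mul]
    _ = Real.exp (-((γ - 1) / 2)) * √γ := by
        congr 2
        simp only [t]
        field_simp

end ConvexCombination

lemma le_exp_sqrt_two_mul_sub_one_sub_one {γ : ℝ} (hγ : 1 ≤ γ) :
    γ ≤ Real.exp (√(2 * γ - 1) - 1) := by
  have hs_sq : √(2 * γ - 1) ^ 2 = 2 * γ - 1 := Real.sq_sqrt (by linarith)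
  have hs_ge : 1 ≤ √(2 * γ - 1) := Real.one_le_sqrt.mpr (by linarith)
  calc γ = 1 + (√(2 * γ - 1) - 1) + (√(2 * γ - 1) - 1) ^ 2 / 2 := by linear_combination -hs_sq / 2
    _ ≤ Real.exp (√(2 * γ - 1) - 1) := Real.quadratic_le_exp_of_nonneg (sub_nonneg.mpr hs_ge)

lemma exp_mul_sqrt_le_exp_sub_sqrt {γ : ℝ} (hγ : 1 ≤ γ) :
    Real.exp (-((γ - 1) / 2)) * √γ ≤ Real.exp (-(1 / 2) * (γ - √(2 * γ - 1))) := by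
  have hsqrt : √γ ≤ Real.exp ((√(2 * γ - 1) - 1) / 2) := by
    rw [Real.exp_half]
    exact Real.sqrt_le_sqrt (le_exp_sqrt_two_mul_sub_one_sub_one hγ)
  calc Real.exp (-((γ - 1) / 2)) * √γ
      ≤ Real.exp (-((γ - 1) / 2)) * Real.exp ((√(2 * γ - 1) - 1) / 2) := by gcongr
    _ = Real.exp (-(1 / 2) * (γ - √(2 * γ - 1))) := by
        rw [← Real.exp_add]
        congr 1
        ring

theorem convex_combination_chiSq_tail_bound_general {Ω ι : Type*} [MeasurableSpace Ω]
    {μ : Measure Ω} {s : Finset ι} {u : ι → Ω → ℝ}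
    (hu : ∀ i ∈ s, HasLaw (u i) (gaussianReal 0 1) μ)
    {lam : ι → ℝ} (hlam : ∀ i ∈ s, 0 ≤ lam i) (hsum : ∑ i ∈ s, lam i = 1)
    {γ : ℝ} (hγ : 1 ≤ γ) :
    μ {ω | γ ≤ ∑ i ∈ s, lam i * u i ω ^ 2} ≤
      ENNReal.ofReal (Real.exp (-(1 / 2) * (γ - √(2 * γ - 1)))) :=
  (measure_convexCombination_sq_gaussian_ge_le hlam hsum hu hγ).trans
    (ENNReal.ofReal_le_ofReal (exp_mul_sqrt_le_exp_sub_sqrt hγ))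

/-- Tail bound for a convex combination of squares of independent standard
normal variables: if `λ̄ᵢ ≥ 0` sum to `1`, then for `γ ≥ 1`,
`P(Σ λ̄ᵢ uᵢ² > γ) ≤ r · exp(−(γ − √(2γ − 1))/2)`. -/
theorem convex_combination_chiSq_tail_bound {Ω : Type*} [MeasureSpace Ω]
    [IsProbabilityMeasure (ℙ : Measure Ω)] {r : ℕ}
    (u : Fin r → Ω → ℝ) (hu : ∀ i, Measurable (u i))
    (hindep : iIndepFun u ℙ)
    (hgauss : ∀ i, Measure.map (u i) ℙ = gaussianReal 0 1)
    (lam : Fin r → ℝ) (hlam : ∀ i, 0 ≤ lam i) (hsum : ∑ i, lam i = 1)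
    (γ : ℝ) (hγ : 1 ≤ γ) :
    ℙ {ω | ∑ i, lam i * u i ω ^ 2 > γ} ≤
      ENNReal.ofReal ((r : ℝ) * Real.exp (-(1 / 2) * (γ - Real.sqrt (2 * γ - 1)))) := by
  have hr : (1 : ℝ) ≤ r := Nat.one_le_cast.mpr (Nat.pos_of_ne_zero (by rintro rfl; simp at hsum))
  calc ℙ {ω | ∑ i, lam i * u i ω ^ 2 > γ}
      ≤ ℙ {ω | γ ≤ ∑ i, lam i * u i ω ^ 2} :=
        measure_mono (Set.ofPred_subset_ofPred.mpr fun _ ↦ le_of_lt)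
    _ ≤ ENNReal.ofReal (Real.exp (-(1 / 2) * (γ - √(2 * γ - 1)))) :=
        convex_combination_chiSq_tail_bound_general
          (fun i _ ↦ ⟨(hu i).aemeasurable, hgauss i⟩) (fun i _ ↦ hlam i) hsum hγ
    _ ≤ ENNReal.ofReal (r * Real.exp (-(1 / 2) * (γ - √(2 * γ - 1)))) :=
        ENNReal.ofReal_le_ofReal (le_mul_of_one_le_left (Real.exp_nonneg _) hr)
end

section
/- Let M and M' be d×d real symmetric positive definite matrices, each with condition number at most K (K ≥ 1) and trace at most R (R > 0), and let x_i, x_j ∈ ℝ^d with ‖x_i‖₂ ≤ Γ and ‖x_j‖₂ ≤ Γ. Then | (x_i − x_j)ᵀ M (x_i − x_j) − (x_i − x_j)ᵀ M' (x_i − x_j) | ≤ 4 (K + 1) R Γ² / d. -/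
open Matrix

/-!
The smallest eigenvalue of a positive definite `M` is at most the average `tr M / d`, so the
largest one is at most `K R / d`. Hence both losses lie in `[0, (K R / d) ‖x - y‖²]`, and so does
the absolute value of their difference, where `‖x - y‖ ≤ 2Γ`.
-/

section

open scoped ComplexOrder MatrixOrder

variable {𝕜 n : Type*} [RCLike 𝕜] [Fintype n] [DecidableEq n] {M : Matrix n n 𝕜}

/-- The condition number `λ_max / λ_min` of a Hermitian matrix, meant for positive definite ones;
it takes the junk value `0` when `λ_min = 0`. -/
noncomputable def conditionNumber (hM : M.IsHermitian) : ℝ :=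
  (⨆ i, hM.eigenvalues i) / ⨅ i, hM.eigenvalues i

lemma le_algebraMap_of_eigenvalues_le (hM : M.IsHermitian) {c : ℝ}
    (hc : ∀ i, hM.eigenvalues i ≤ c) : M ≤ algebraMap ℝ (Matrix n n 𝕜) c := by
  refine le_algebraMap_of_spectrum_le ?_ hM.isSelfAdjoint
  rw [hM.spectrum_real_eq_range_eigenvalues]
  exact Set.forall_mem_range.2 hc

lemma re_dotProduct_mulVec_le_of_eigenvalues_le (hM : M.IsHermitian) {c : ℝ}
    (hc : ∀ i, hM.eigenvalues i ≤ c) (z : EuclideanSpace 𝕜 n) :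
    RCLike.re (star z.ofLp ⬝ᵥ M *ᵥ z.ofLp) ≤ c * ‖z‖ ^ 2 := by
  have hpsd : (algebraMap ℝ (Matrix n n 𝕜) c - M).PosSemidef :=
    Matrix.le_iff.1 (le_algebraMap_of_eigenvalues_le hM hc)
  have hnorm : RCLike.re (star z.ofLp ⬝ᵥ z.ofLp) = ‖z‖ ^ 2 := by
    rw [dotProduct_comm, ← EuclideanSpace.inner_eq_star_dotProduct, inner_self_eq_norm_sq]
  have hnonneg := hpsd.re_dotProduct_nonneg z.ofLp
  rwa [Algebra.algebraMap_eq_smul_one, sub_mulVec, smul_mulVec, one_mulVec, dotProduct_sub,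
    dotProduct_smul, map_sub, RCLike.smul_re, hnorm, sub_nonneg] at hnonneg

lemma card_mul_iInf_eigenvalues_le_re_trace (hM : M.IsHermitian) :
    Fintype.card n * ⨅ i, hM.eigenvalues i ≤ RCLike.re M.trace := by
  have hle := Finset.univ.card_nsmul_le_sum hM.eigenvalues (⨅ i, hM.eigenvalues i)
    fun i _ => ciInf_le (Set.finite_range _).bddBelow i
  simpa [hM.trace_eq_sum_eigenvalues] using hle

lemma iInf_eigenvalues_pos [Nonempty n] (hM : M.PosDef) : 0 < ⨅ i, hM.1.eigenvalues i := by
  obtain ⟨i, hi⟩ := exists_eq_ciInf_of_finite (f := hM.1.eigenvalues)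
  exact hi ▸ hM.eigenvalues_pos i

lemma conditionNumber_nonneg (hM : M.PosDef) : 0 ≤ conditionNumber hM.1 :=
  div_nonneg (Real.iSup_nonneg fun i => (hM.eigenvalues_pos i).le)
    (Real.iInf_nonneg fun i => (hM.eigenvalues_pos i).le)

lemma eigenvalues_le_conditionNumber_mul_re_trace_div_card [Nonempty n] (hM : M.PosDef) (i : n) :
    hM.1.eigenvalues i ≤ conditionNumber hM.1 * (RCLike.re M.trace / Fintype.card n) := by
  have hcard : (0 : ℝ) < Fintype.card n := Nat.cast_pos.2 Fintype.card_pos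
  calc hM.1.eigenvalues i
      ≤ ⨆ j, hM.1.eigenvalues j := le_ciSup (Set.finite_range _).bddAbove i
    _ = conditionNumber hM.1 * ⨅ j, hM.1.eigenvalues j :=
        (div_mul_cancel₀ _ (iInf_eigenvalues_pos hM).ne').symm
    _ ≤ conditionNumber hM.1 * (RCLike.re M.trace / Fintype.card n) := by
        refine mul_le_mul_of_nonneg_left ?_ (conditionNumber_nonneg hM)
        rw [le_div_iff₀' hcard]
        exact card_mul_iInf_eigenvalues_le_re_trace hM.1

lemma re_dotProduct_mulVec_le_of_conditionNumber_le [Nonempty n] (hM : M.PosDef) {K R : ℝ}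
    (hcond : conditionNumber hM.1 ≤ K) (htr : RCLike.re M.trace ≤ R) (z : EuclideanSpace 𝕜 n) :
    RCLike.re (star z.ofLp ⬝ᵥ M *ᵥ z.ofLp) ≤ K * (R / Fintype.card n) * ‖z‖ ^ 2 := by
  refine re_dotProduct_mulVec_le_of_eigenvalues_le hM.1 (fun i => ?_) z
  have hK : 0 ≤ K := (conditionNumber_nonneg hM).trans hcond
  have htrace : 0 ≤ RCLike.re M.trace := (RCLike.nonneg_iff.1 hM.posSemidef.trace_nonneg).1
  calc hM.1.eigenvalues i
      ≤ conditionNumber hM.1 * (RCLike.re M.trace / Fintype.card n) :=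
        eigenvalues_le_conditionNumber_mul_re_trace_div_card hM i
    _ ≤ K * (R / Fintype.card n) := by gcongr

theorem bdml_stability_bound_general [Nonempty n] {M M' : Matrix n n 𝕜}
    (hM : M.PosDef) (hM' : M'.PosDef) {K R Γ : ℝ}
    (hcond : conditionNumber hM.1 ≤ K) (hcond' : conditionNumber hM'.1 ≤ K)
    (htr : RCLike.re M.trace ≤ R) (htr' : RCLike.re M'.trace ≤ R)
    {x y : EuclideanSpace 𝕜 n} (hx : ‖x‖ ≤ Γ) (hy : ‖y‖ ≤ Γ) :
    |RCLike.re (star (x - y).ofLp ⬝ᵥ M *ᵥ (x - y).ofLp) -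
      RCLike.re (star (x - y).ofLp ⬝ᵥ M' *ᵥ (x - y).ofLp)| ≤
      4 * K * R * Γ ^ 2 / Fintype.card n := by
  have hK : 0 ≤ K := (conditionNumber_nonneg hM).trans hcond
  have hR : 0 ≤ R := (RCLike.nonneg_iff.1 hM.posSemidef.trace_nonneg).1.trans htr
  have hdist : ‖x - y‖ ≤ 2 * Γ := by linarith [norm_sub_le x y]
  calc _ ≤ K * (R / Fintype.card n) * ‖x - y‖ ^ 2 :=
        abs_sub_le_of_nonneg_of_le
          (hM.posSemidef.re_dotProduct_nonneg _)
          (re_dotProduct_mulVec_le_of_conditionNumber_le hM hcond htr _)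
          (hM'.posSemidef.re_dotProduct_nonneg _)
          (re_dotProduct_mulVec_le_of_conditionNumber_le hM' hcond' htr' _)
    _ ≤ K * (R / Fintype.card n) * (2 * Γ) ^ 2 := by gcongr
    _ = 4 * K * R * Γ ^ 2 / Fintype.card n := by ring

end

/-- Uniform-Replace-One stability of BDML: if `M` and `M'` are symmetric
positive definite with condition number at most `K` and trace at most `R`, and
`‖xᵢ‖₂, ‖xⱼ‖₂ ≤ Γ`, then the losses differ by at most `4(K+1)RΓ²/d`. -/
theorem bdml_stability_bound {d : ℕ} (hd : 0 < d)
    (M M' : Matrix (Fin d) (Fin d) ℝ) (hM : M.PosDef) (hM' : M'.PosDef)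
    (K R Γ : ℝ) (hK : 1 ≤ K) (hR : 0 < R)
    (hcond : (⨆ i, hM.1.eigenvalues i) / (⨅ i, hM.1.eigenvalues i) ≤ K)
    (hcond' : (⨆ i, hM'.1.eigenvalues i) / (⨅ i, hM'.1.eigenvalues i) ≤ K)
    (htr : M.trace ≤ R) (htr' : M'.trace ≤ R)
    (x y : EuclideanSpace ℝ (Fin d)) (hx : ‖x‖ ≤ Γ) (hy : ‖y‖ ≤ Γ) :
    |(fun i => x i - y i) ⬝ᵥ M.mulVec (fun i => x i - y i) -
      (fun i => x i - y i) ⬝ᵥ M'.mulVec (fun i => x i - y i)| ≤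
      4 * (K + 1) * R * Γ ^ 2 / d := by
  have : Nonempty (Fin d) := ⟨⟨0, hd⟩⟩
  calc _ ≤ 4 * K * R * Γ ^ 2 / Fintype.card (Fin d) :=
        bdml_stability_bound_general hM hM' hcond hcond' htr htr' hx hy
    _ ≤ 4 * (K + 1) * R * Γ ^ 2 / d := by
        rw [Fintype.card_fin]
        gcongr
        exact (lt_add_one K).le
end
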